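/- Let X, Y be Banach spaces, C ⊆ Y a closed convex pointed cone with nonempty interior, and f : X → Y be C-convex. Then for every y ∈ Y, the function x ↦ D_{−C}(f(x) − y) is convex on X. -/

import Mathlib

/-!
On a convex set `K` the distance to the complement is concave: balls inside `K` around two points
combine to a ball inside `K` around a convex combination of the points, with the combined radius.
The oriented distance to `K` is the infimal convolution of the norm with the convex function
`p ↦ -d(p, Kᶜ)` on `K`, so it is convex on the whole space. Translating by an element of the convex
cone `-C` maps `-C` into itself and therefore does not increase `D_{-C}`; the defect of convexity
of a `C`-convex map is such a translation.
-/

open Metric Set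

section OrientedDist

variable {E : Type*} [SeminormedAddCommGroup E] {K : Set E} {u v : E}

theorem infDist_add_right_le (hK : ∀ p ∈ K, p + v ∈ K) : infDist (u + v) K ≤ infDist u K := by
  rcases K.eq_empty_or_nonempty with rfl | hne
  · simp only [infDist_empty, le_refl]
  · calc
      infDist (u + v) K ≤ infDist (u + v) ((· + v) '' K) :=
        infDist_le_infDist_of_subset (image_subset_iff.2 hK) (hne.image _)
      _ = infDist u K := infDist_image (isometry_add_right v)

/-- The oriented distance `D_K(u) = d_K(u) - d_{Kᶜ}(u)` from `u` to `K`. As `infDist` to the empty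
set is `0`, it vanishes identically for `K = ∅` and for `K = univ`. -/
noncomputable def orientedDist (K : Set E) (u : E) : ℝ :=
  infDist u K - infDist u Kᶜ

theorem orientedDist_add_right_le (hK : ∀ p ∈ K, p + v ∈ K) :
    orientedDist K (u + v) ≤ orientedDist K u := by
  have hKc : ∀ q ∈ Kᶜ, q + -v ∈ Kᶜ := fun q hq hqv => hq (by simpa using hK _ hqv)
  have hcompl : infDist u Kᶜ ≤ infDist (u + v) Kᶜ := by
    simpa using infDist_add_right_le (u := u + v) hKc
  exact sub_le_sub (infDist_add_right_le hK) hcompl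

variable [NormedSpace ℝ E]

theorem infDist_compl_add_infDist_le_dist (hu : u ∈ K) (hv : v ∉ K) :
    infDist u Kᶜ + infDist v K ≤ dist u v := by
  rcases (infDist_nonneg (x := u) (s := Kᶜ)).eq_or_lt with hr | hr
  · rw [← hr, zero_add, dist_comm]
    exact infDist_le_dist_of_mem hu
  rcases (infDist_nonneg (x := v) (s := K)).eq_or_lt with hs | hs
  · rw [← hs, add_zero]
    exact infDist_le_dist_of_mem hv
  · exact (disjoint_ball_ball_iff hr hs).1
      (disjoint_ball_infDist.symm.mono_left ball_infDist_compl_subset)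

theorem orientedDist_le_dist_sub_infDist_compl (hv : v ∈ K) :
    orientedDist K u ≤ dist u v - infDist v Kᶜ := by
  rw [orientedDist]
  by_cases hu : u ∈ K
  · have hcompl := infDist_le_infDist_add_dist (s := Kᶜ) (x := v) (y := u)
    rw [infDist_zero_of_mem hu, dist_comm u v]
    linarith
  · have hdist := infDist_compl_add_infDist_le_dist hv hu
    rw [infDist_zero_of_mem (mem_compl hu), dist_comm u v]
    linarith

theorem isGLB_orientedDist (hK : K.Nonempty) (u : E) :
    IsGLB ((fun p => dist u p - infDist p Kᶜ) '' K) (orientedDist K u) := by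
  refine ⟨forall_mem_image.2 fun p hp => orientedDist_le_dist_sub_infDist_compl hp,
    fun c hc => ?_⟩
  have hc_le : ∀ p ∈ K, c ≤ dist u p - infDist p Kᶜ := forall_mem_image.1 hc
  rw [orientedDist]
  by_cases hu : u ∈ K
  · simpa only [infDist_zero_of_mem hu, dist_self] using hc_le u hu
  · rw [infDist_zero_of_mem (mem_compl hu), sub_zero, le_infDist hK]
    exact fun p hp => (hc_le p hp).trans (sub_le_self _ infDist_nonneg)

theorem add_infDist_compl_smul_mem {e : E} (hu : u ∈ K) (he : ‖e‖ < 1) :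
    u + infDist u Kᶜ • e ∈ K := by
  by_contra hmem
  have hle : infDist u Kᶜ ≤ infDist u Kᶜ * ‖e‖ := by
    simpa only [dist_self_add_right, norm_smul, Real.norm_of_nonneg infDist_nonneg] using
      infDist_le_dist_of_mem (x := u) (mem_compl hmem)
  have hzero : infDist u Kᶜ = 0 := by
    nlinarith [infDist_nonneg (x := u) (s := Kᶜ)]
  exact hmem (by simpa only [hzero, zero_smul, add_zero] using hu)

theorem concaveOn_infDist_compl (hK : Convex ℝ K) : ConcaveOn ℝ K (infDist · Kᶜ) := by
  refine ⟨hK, fun u hu v hv a b ha hb hab => ?_⟩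
  simp only [smul_eq_mul]
  rcases (Kᶜ).eq_empty_or_nonempty with hempty | hne
  · simp only [hempty, infDist_empty, mul_zero, add_zero, le_refl]
  refine (le_infDist hne).2 fun w hw => ?_
  set R := a * infDist u Kᶜ + b * infDist v Kᶜ with hR
  by_contra! hlt
  have hRpos : 0 < R := dist_nonneg.trans_lt hlt
  set e := R⁻¹ • (w - (a • u + b • v)) with he
  have he_lt : ‖e‖ < 1 := by
    rwa [he, norm_smul, Real.norm_of_nonneg (inv_nonneg.2 hRpos.le), ← dist_eq_norm, dist_comm,
      inv_mul_lt_one₀ hRpos]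
  have hw_eq : a • (u + infDist u Kᶜ • e) + b • (v + infDist v Kᶜ • e) = w := calc
    _ = a • u + b • v + R • e := by rw [hR]; module
    _ = w := by rw [he, smul_inv_smul₀ hRpos.ne', add_sub_cancel]
  exact hw (hw_eq ▸ hK (add_infDist_compl_smul_mem hu he_lt) (add_infDist_compl_smul_mem hv he_lt)
    ha hb hab)

theorem dist_combo_le {a b : ℝ} (ha : 0 ≤ a) (hb : 0 ≤ b) (u v p q : E) :
    dist (a • u + b • v) (a • p + b • q) ≤ a * dist u p + b * dist v q := by
  simpa only [dist_smul₀, Real.norm_of_nonneg ha, Real.norm_of_nonneg hb] using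
    dist_add_add_le (a • u) (b • v) (a • p) (b • q)

theorem convexOn_orientedDist (hK : Convex ℝ K) : ConvexOn ℝ univ (orientedDist K) := by
  rcases K.eq_empty_or_nonempty with rfl | hne
  · have hzero : orientedDist (∅ : Set E) = fun _ => 0 := by
      funext u
      rw [orientedDist, infDist_empty, infDist_zero_of_mem (notMem_empty u), sub_zero]
    exact hzero ▸ convexOn_const 0 convex_univ
  refine ⟨convex_univ, fun u _ v _ a b ha hb hab => le_of_forall_pos_le_add fun ε hε => ?_⟩
  obtain ⟨_, ⟨p, hp, rfl⟩, -, hup⟩ := (isGLB_orientedDist hne u).exists_between_self_add hε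
  obtain ⟨_, ⟨q, hq, rfl⟩, -, hvq⟩ := (isGLB_orientedDist hne v).exists_between_self_add hε
  have hconcave := (concaveOn_infDist_compl hK).2 hp hq ha hb hab
  simp only [smul_eq_mul] at hconcave ⊢
  calc
    orientedDist K (a • u + b • v)
      ≤ dist (a • u + b • v) (a • p + b • q) - infDist (a • p + b • q) Kᶜ :=
        orientedDist_le_dist_sub_infDist_compl (hK hp hq ha hb hab)
    _ ≤ (a * dist u p + b * dist v q) - (a * infDist p Kᶜ + b * infDist q Kᶜ) :=
        sub_le_sub (dist_combo_le ha hb u v p q) hconcave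
    _ = a * (dist u p - infDist p Kᶜ) + b * (dist v q - infDist q Kᶜ) := by ring
    _ ≤ a * (orientedDist K u + ε) + b * (orientedDist K v + ε) := by gcongr
    _ = a * orientedDist K u + b * orientedDist K v + ε := by linear_combination ε * hab

end OrientedDist

theorem add_mem_of_convex_of_smul_mem {𝕜 E : Type*} [Field 𝕜] [LinearOrder 𝕜]
    [IsStrictOrderedRing 𝕜] [AddCommGroup E] [Module 𝕜 E] {C : Set E} (hCconv : Convex 𝕜 C)
    (hCcone : ∀ t : 𝕜, 0 < t → ∀ c ∈ C, t • c ∈ C) {c d : E} (hc : c ∈ C) (hd : d ∈ C) :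
    c + d ∈ C := by
  have hmid : (2⁻¹ : 𝕜) • c + (2⁻¹ : 𝕜) • d ∈ C :=
    hCconv hc hd (by positivity) (by positivity) (by norm_num)
  simpa [smul_smul] using hCcone 2 two_pos _ hmid

theorem orientedDist_comp_convex_general
    {X Y : Type*} [AddCommGroup X] [Module ℝ X] [SeminormedAddCommGroup Y] [NormedSpace ℝ Y]
    {C : Set Y} (hCconv : Convex ℝ C) (hCcone : ∀ t : ℝ, 0 < t → ∀ c ∈ C, t • c ∈ C)
    {s : Set X} (hs : Convex ℝ s) {f : X → Y}
    (hf : ∀ x ∈ s, ∀ z ∈ s, ∀ t : ℝ, 0 ≤ t → t ≤ 1 →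
      t • f x + (1 - t) • f z - f (t • x + (1 - t) • z) ∈ C)
    (y : Y) : ConvexOn ℝ s (fun x => orientedDist (-C) (f x - y)) := by
  refine ⟨hs, fun x hx z hz a b ha hb hab => ?_⟩
  obtain rfl : b = 1 - a := eq_sub_of_add_eq' hab
  set m := a • (f x - y) + (1 - a) • (f z - y) with hm
  set c := a • f x + (1 - a) • f z - f (a • x + (1 - a) • z) with hc
  have hcC : c ∈ C := hf x hx z hz a ha (sub_nonneg.1 hb)
  have htranslate : ∀ p ∈ -C, p + -c ∈ -C := fun p hp => by
    simpa only [mem_neg, neg_add, neg_neg] using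
      add_mem_of_convex_of_smul_mem hCconv hCcone hp hcC
  calc
    orientedDist (-C) (f (a • x + (1 - a) • z) - y)
      = orientedDist (-C) (m + -c) := by congr 1; rw [hm, hc]; module
    _ ≤ orientedDist (-C) m := orientedDist_add_right_le htranslate
    _ ≤ a • orientedDist (-C) (f x - y) + (1 - a) • orientedDist (-C) (f z - y) :=
        (convexOn_orientedDist hCconv.neg).2 (mem_univ _) (mem_univ _) ha hb hab

/-- If `f : X → Y` is `C`-convex, then for every `y ∈ Y` the function
`x ↦ D_{-C}(f x - y)` is convex on `X`. -/
theorem orientedDist_comp_convex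
    {X Y : Type*} [NormedAddCommGroup X] [NormedSpace ℝ X] [CompleteSpace X]
    [NormedAddCommGroup Y] [NormedSpace ℝ Y] [CompleteSpace Y]
    (C : Set Y) (hCclosed : IsClosed C) (hCconv : Convex ℝ C)
    (hCcone : ∀ t : ℝ, 0 ≤ t → ∀ y ∈ C, t • y ∈ C)
    (hCpointed : C ∩ (-C) = {0}) (hCint : (interior C).Nonempty)
    (f : X → Y)
    (hf : ∀ x z : X, ∀ t : ℝ, 0 ≤ t → t ≤ 1 →
      t • f x + (1 - t) • f z - f (t • x + (1 - t) • z) ∈ C)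
    (y : Y) :
    ConvexOn ℝ Set.univ (fun x : X =>
      Metric.infDist (f x - y) (-C) - Metric.infDist (f x - y) ((-C)ᶜ)) :=
  orientedDist_comp_convex_general hCconv (fun t ht => hCcone t ht.le) convex_univ
    (fun x _ z _ => hf x z) y
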